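/- arXiv:2505.18287 — 8 statements merged into one kernel-verified Lean document; each statement's English description precedes it below -/
import Mathlib

section
/- (Correctness of the reduction from Util-β-SCE with f = 1 to Weighted Set Packing.) Let m, τ, k, η be natural numbers with k ≥ 1 and τ ≥ 1, and let β : Finset (Fin m) → ℕ be a committee scoring function. Then the following are equivalent: (i) there exists a consecutive 1-frequency committee series W : Fin τ → Finset (Fin m) with committee size k and utilitarian quality ∑ i, β (W i) ≥ η; (ii) there exists a Finset 𝒮 of committees with 𝒮.card = τ, whose members are pairwise disjoint, each of cardinality k, and ∑_{S ∈ 𝒮} β S ≥ η. -/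
/-!
Frequency at most one says exactly that distinct committees of a series share no candidate, and
consecutiveness is then automatic. As committees are nonempty (`1 ≤ k`), a 1-frequency series is
injective, so its image is a packing of `τ` sets with the same total score. Conversely, any
enumeration of a packing by `Fin τ` is a consecutive 1-frequency series.
-/

/-- A committee series `W` of length `τ` over candidates `Fin m` is a consecutive
`f`-frequency series if every candidate belongs to at most `f` committees and the
set of indices of committees containing the candidate is consecutive. -/
def ConsecutiveFrequency {m τ : ℕ} (f : ℕ) (W : Fin τ → Finset (Fin m)) : Prop :=
  ∀ c : Fin m,
    (Finset.univ.filter (fun i => c ∈ W i)).card ≤ f ∧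
    ∀ a b x : Fin τ, c ∈ W a → c ∈ W b → a ≤ x → x ≤ b → c ∈ W x

/-- Correctness of the reduction from Util-β-SCE with `f = 1` to Weighted Set Packing:
there is a consecutive 1-frequency committee series of length `τ` with committee size `k`
and utilitarian quality at least `η` iff there are `τ` pairwise disjoint size-`k`
committees of total score at least `η`. -/
theorem util_f_one_iff_weighted_set_packing {m τ k η : ℕ}
    (hk : 1 ≤ k) (hτ : 1 ≤ τ) (β : Finset (Fin m) → ℕ) :
    (∃ W : Fin τ → Finset (Fin m),
        ConsecutiveFrequency 1 W ∧ (∀ i, (W i).card = k) ∧ η ≤ ∑ i, β (W i)) ↔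
    (∃ 𝒮 : Finset (Finset (Fin m)),
        𝒮.card = τ ∧
        (∀ S ∈ 𝒮, ∀ T ∈ 𝒮, S ≠ T → S ∩ T = ∅) ∧
        (∀ S ∈ 𝒮, S.card = k) ∧
        η ≤ ∑ S ∈ 𝒮, β S) := by
  constructor
  · rintro ⟨W, hW, hcard, hη⟩
    have huniq : ∀ c i j, c ∈ W i → c ∈ W j → i = j := fun c i j hi hj =>
      Finset.card_le_one.mp (hW c).1 i (by simpa using hi) j (by simpa using hj)
    -- Committees are nonempty because `1 ≤ k`, so two equal committees share a candidate.
    have hinj : Function.Injective W := by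
      intro i j hij
      obtain ⟨c, hc⟩ := Finset.card_pos.mp (by rw [hcard i]; exact hk : 0 < (W i).card)
      exact huniq c i j hc (hij ▸ hc)
    refine ⟨Finset.univ.image W, ?_, ?_, ?_, ?_⟩
    · rw [Finset.card_image_of_injective _ hinj, Finset.card_univ, Fintype.card_fin]
    · simp only [Finset.mem_image, Finset.mem_univ, true_and]
      rintro _ ⟨i, rfl⟩ _ ⟨j, rfl⟩ hne
      refine Finset.eq_empty_of_forall_notMem fun c hc => hne ?_
      rw [Finset.mem_inter] at hc
      rw [huniq c i j hc.1 hc.2]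
    · simpa using hcard
    · rwa [Finset.sum_image hinj.injOn]
  · rintro ⟨𝒮, hτcard, hdisj, hcard, hη⟩
    let e : Fin τ ≃ 𝒮 := (𝒮.equivFinOfCardEq hτcard).symm
    have huniq : ∀ c i j, c ∈ (e i).1 → c ∈ (e j).1 → i = j := by
      intro c i j hi hj
      by_contra hne
      have h := hdisj _ (e i).2 _ (e j).2 fun h => hne (e.injective (Subtype.ext h))
      exact Finset.notMem_empty c (h ▸ Finset.mem_inter.mpr ⟨hi, hj⟩)
    refine ⟨fun i => (e i).1, fun c => ⟨?_, ?_⟩, fun i => hcard _ (e i).2, ?_⟩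
    · refine Finset.card_le_one.mpr fun i hi j hj => ?_
      exact huniq c i j (by simpa using hi) (by simpa using hj)
    · intro a b x ha hb hax hxb
      -- A candidate occurs in a single committee, so `a = b` and hence `x = a`.
      have hab := huniq c a b ha hb
      subst hab
      exact le_antisymm hax hxb ▸ ha
    · rwa [Equiv.sum_comp e fun S => β S.1, Finset.sum_coe_sort 𝒮 β]
end

section
/- (Combinatorial content of the reduction of Egal-β-SCE with frequency f ≥ 2 to frequency 1, BKN Lemma 1, and of the egalitarian FPT(τ) algorithm.) Let m, τ, k, f, η be natural numbers with f ≥ 1, k ≥ 1 and τ ≥ 1, and let β : Finset (Fin m) → ℕ be a committee scoring function. Then the following are equivalent: (i) there exists a consecutive f-frequency committee series W : Fin τ → Finset (Fin m) with committee size k such that β (W i) ≥ η for every i (i.e. whose egalitarian quality is at least η); (ii) there exists a Finset 𝒮 of committees with 𝒮.card = ⌈τ/f⌉ (the least integer at least τ/f, i.e. (τ + f − 1)/f), whose members are pairwise disjoint, each of cardinality k, and with β S ≥ η for every S ∈ 𝒮. -/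
/-- Two committees of the series at distance at least `f` share no candidate. -/
lemma ConsecutiveFrequency.disjoint_of_add_le {m τ f : ℕ} {W : Fin τ → Finset (Fin m)}
    (hW : ConsecutiveFrequency f W) {a b : Fin τ} (hab : (a : ℕ) + f ≤ b) :
    Disjoint (W a) (W b) := by
  rw [Finset.disjoint_left]
  intro c hca hcb
  obtain ⟨hcard, hcons⟩ := hW c
  have hsub : Finset.Icc a b ⊆ Finset.univ.filter (fun i => c ∈ W i) := by
    intro x hx
    rw [Finset.mem_Icc] at hx
    simpa using hcons a b x hca hcb hx.1 hx.2
  have hle := Finset.card_le_card hsub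
  rw [Fin.card_Icc] at hle
  omega

lemma card_filter_div_eq_le {τ f : ℕ} (hf : 1 ≤ f) (q : ℕ) :
    (Finset.univ.filter (fun i : Fin τ => (i : ℕ) / f = q)).card ≤ f := by
  calc (Finset.univ.filter (fun i : Fin τ => (i : ℕ) / f = q)).card
      ≤ (Finset.Ico (q * f) (q * f + f)).card := by
        refine Finset.card_le_card_of_injOn (fun i => (i : ℕ)) ?_
          (fun _ _ _ _ h => Fin.ext h)
        intro i hi
        have hi' : (i : ℕ) / f = q := by simpa using hi
        have h := (Nat.div_eq_iff (by omega : 0 < f)).1 hi'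
        simp only [Finset.coe_Ico, Set.mem_Ico]
        omega
    _ = f := by simp

/-- Combinatorial content of the reduction of Egal-β-SCE with frequency `f` to frequency 1:
there is a consecutive `f`-frequency committee series of length `τ` with committee size `k`
in which every committee has score at least `η` iff there are `⌈τ/f⌉` pairwise disjoint
size-`k` committees each of score at least `η`. -/
theorem egal_freq_f_iff_set_packing {m τ k f η : ℕ}
    (hf : 1 ≤ f) (hk : 1 ≤ k) (hτ : 1 ≤ τ) (β : Finset (Fin m) → ℕ) :
    (∃ W : Fin τ → Finset (Fin m),
        ConsecutiveFrequency f W ∧ (∀ i, (W i).card = k) ∧ ∀ i, η ≤ β (W i)) ↔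
    (∃ 𝒮 : Finset (Finset (Fin m)),
        𝒮.card = (τ + f - 1) / f ∧
        (∀ S ∈ 𝒮, ∀ T ∈ 𝒮, S ≠ T → S ∩ T = ∅) ∧
        (∀ S ∈ 𝒮, S.card = k) ∧
        (∀ S ∈ 𝒮, η ≤ β S)) := by
  constructor
  · rintro ⟨W, hW, hcard, hβ⟩
    have hlt : ∀ j : Fin ((τ + f - 1) / f), (j : ℕ) * f < τ := by
      intro j
      have h := (Nat.le_div_iff_mul_le (by omega : 0 < f)).1 (Nat.succ_le_of_lt j.2)
      rw [Nat.succ_mul] at h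
      omega
    let V : Fin ((τ + f - 1) / f) → Finset (Fin m) := fun j => W ⟨j * f, hlt j⟩
    have hdisj_lt : ∀ i j, i < j → Disjoint (V i) (V j) := by
      intro i j hij
      apply hW.disjoint_of_add_le
      have h := Nat.mul_le_mul_right f (Nat.succ_le_of_lt (Fin.lt_def.1 hij))
      rwa [Nat.succ_mul] at h
    have hdisj : ∀ i j, i ≠ j → Disjoint (V i) (V j) := by
      intro i j hij
      rcases lt_or_gt_of_ne hij with h | h
      · exact hdisj_lt i j h
      · exact (hdisj_lt j i h).symm
    have hinj : Function.Injective V := by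
      intro i j hij
      by_contra hne
      have h := hdisj i j hne
      rw [← hij, disjoint_self, Finset.bot_eq_empty] at h
      have h' : (V i).card = k := hcard _
      rw [h, Finset.card_empty] at h'
      omega
    refine ⟨Finset.univ.image V, ?_, ?_, ?_, ?_⟩
    · rw [Finset.card_image_of_injective _ hinj, Finset.card_fin]
    · simp only [Finset.mem_image, Finset.mem_univ, true_and]
      rintro _ ⟨i, rfl⟩ _ ⟨j, rfl⟩ hne
      exact Finset.disjoint_iff_inter_eq_empty.1 (hdisj i j fun h => hne (congrArg V h))
    · simp only [Finset.mem_image, Finset.mem_univ, true_and]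
      rintro _ ⟨i, rfl⟩
      exact hcard _
    · simp only [Finset.mem_image, Finset.mem_univ, true_and]
      rintro _ ⟨i, rfl⟩
      exact hβ _
  · rintro ⟨𝒮, hn, hdisj, hcard, hβ⟩
    let e : 𝒮 ≃ Fin ((τ + f - 1) / f) := 𝒮.equivFinOfCardEq hn
    have hlt : ∀ i : Fin τ, (i : ℕ) / f < (τ + f - 1) / f := by
      intro i
      have h : ((i : ℕ) + f) / f ≤ (τ + f - 1) / f := Nat.div_le_div_right (by omega)
      rw [Nat.add_div_right _ (by omega : 0 < f)] at h
      omega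
    let W : Fin τ → Finset (Fin m) := fun i => (e.symm ⟨(i : ℕ) / f, hlt i⟩ : 𝒮)
    have hmem : ∀ i, W i ∈ 𝒮 := fun i => (e.symm ⟨(i : ℕ) / f, hlt i⟩).2
    have hblock : ∀ (c : Fin m) (i j : Fin τ), c ∈ W i → c ∈ W j →
        (i : ℕ) / f = (j : ℕ) / f := by
      intro c i j hi hj
      have hWij : W i = W j := by
        by_contra hne
        have h : c ∈ W i ∩ W j := Finset.mem_inter.2 ⟨hi, hj⟩
        rw [hdisj _ (hmem i) _ (hmem j) hne] at h
        exact Finset.notMem_empty c h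
      simpa using e.symm.injective (Subtype.ext hWij)
    refine ⟨W, fun c => ⟨?_, ?_⟩, fun i => hcard _ (hmem i), fun i => hβ _ (hmem i)⟩
    · rcases (Finset.univ.filter (fun i => c ∈ W i)).eq_empty_or_nonempty with h | ⟨j, hj⟩
      · rw [h]
        simp
      · refine le_trans (Finset.card_le_card ?_) (card_filter_div_eq_le hf ((j : ℕ) / f))
        intro i hi
        rw [Finset.mem_filter] at hi hj ⊢
        exact ⟨hi.1, hblock c i j hi.2 hj.2⟩
    · intro a b x ha hb hax hxb
      have hab := hblock c a b ha hb
      have h₁ : (a : ℕ) / f ≤ (x : ℕ) / f := Nat.div_le_div_right hax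
      have h₂ : (x : ℕ) / f ≤ (b : ℕ) / f := Nat.div_le_div_right hxb
      have hxa : (x : ℕ) / f = (a : ℕ) / f := by omega
      have hWxa : W x = W a := by
        simp only [W, hxa]
      rwa [hWxa]
end

section
/- (Block-repetition construction used in the FPT(m) algorithm and in the reductions between frequencies.) Let m, k, f, τ, d be natural numbers with d ≥ 1, k ≥ 1, f ≥ 1, let S : Fin d → Finset (Fin m) be pairwise disjoint committees each of cardinality k, and let r : Fin d → ℕ satisfy 1 ≤ r i ≤ f for every i and ∑ i, r i = τ. Define W : Fin τ → Finset (Fin m) by W t = S j, where j is the unique index with ∑_{i < j} r i ≤ (t : ℕ) < ∑_{i ≤ j} r i (i.e. W consists of r 0 copies of S 0, followed by r 1 copies of S 1, and so on). Then W is a consecutive f-frequency committee series of length τ with committee size k; moreover its utilitarian quality satisfies ∑ t, β (W t) = ∑ j, (r j) * β (S j), and its egalitarian quality satisfies min over t of β (W t) = min over j of β (S j), for every committee scoring function β. -/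
/-- The offset of block `j` as computed by `finSigmaFinEquiv` is the sum of the sizes of the
preceding blocks. -/
lemma sum_filter_lt_eq_sum_castLE {d : ℕ} (r : Fin d → ℕ) (j : Fin d) :
    ∑ i ∈ Finset.univ.filter (fun i => i < j), r i
      = ∑ i : Fin (j : ℕ), r (Fin.castLE j.2.le i) := by
  have h : Finset.univ.filter (fun i => i < j)
      = Finset.univ.map (Fin.castLEEmb j.2.le) := by
    ext i
    simp only [Finset.mem_filter, Finset.mem_univ, true_and, Finset.mem_map]
    constructor
    · intro hi
      exact ⟨⟨i, hi⟩, rfl⟩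
    · rintro ⟨a, rfl⟩
      exact a.2
  rw [h, Finset.sum_map]
  rfl

lemma sum_filter_le_eq_add {d : ℕ} (r : Fin d → ℕ) (j : Fin d) :
    ∑ i ∈ Finset.univ.filter (fun i => i ≤ j), r i
      = ∑ i ∈ Finset.univ.filter (fun i => i < j), r i + r j := by
  have h : Finset.univ.filter (fun i => i ≤ j)
      = insert j (Finset.univ.filter (fun i => i < j)) := by
    ext i
    simp [le_iff_eq_or_lt]
  rw [h, Finset.sum_insert (by simp), add_comm]

/-- Block-repetition construction: repeating pairwise disjoint size-`k` committees
`S 0, …, S (d-1)` respectively `r 0, …, r (d-1)` times (with `1 ≤ r i ≤ f` and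
`∑ i, r i = τ`) yields a consecutive `f`-frequency committee series of length `τ`
with committee size `k`, whose utilitarian quality is `∑ j, r j * β (S j)` and whose
egalitarian quality is `min_j β (S j)`, for every committee scoring function `β`. -/
theorem block_repetition {m k f τ d : ℕ} (hd : 1 ≤ d) (hk : 1 ≤ k) (hf : 1 ≤ f)
    (S : Fin d → Finset (Fin m))
    (hSdisj : ∀ i j : Fin d, i ≠ j → S i ∩ S j = ∅)
    (hScard : ∀ i, (S i).card = k)
    (r : Fin d → ℕ) (hr1 : ∀ i, 1 ≤ r i) (hrf : ∀ i, r i ≤ f)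
    (hrsum : ∑ i, r i = τ)
    (W : Fin τ → Finset (Fin m))
    (hW : ∀ (t : Fin τ) (j : Fin d),
        (∑ i ∈ Finset.univ.filter (fun i => i < j), r i) ≤ (t : ℕ) →
        (t : ℕ) < (∑ i ∈ Finset.univ.filter (fun i => i ≤ j), r i) →
        W t = S j) :
    ConsecutiveFrequency f W ∧ (∀ t, (W t).card = k) ∧
    ∀ β : Finset (Fin m) → ℕ,
      (∑ t, β (W t)) = (∑ j, r j * β (S j)) ∧
      sInf (Set.range fun t => β (W t)) = sInf (Set.range fun j => β (S j)) := by
  subst hrsum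
  have hpos : ∀ j (q : Fin (r j)), ((finSigmaFinEquiv ⟨j, q⟩ : Fin (∑ i, r i)) : ℕ)
      = ∑ i ∈ Finset.univ.filter (fun i => i < j), r i + q := by
    intro j q
    rw [finSigmaFinEquiv_apply, sum_filter_lt_eq_sum_castLE]
  have hWe : ∀ j (q : Fin (r j)), W (finSigmaFinEquiv ⟨j, q⟩) = S j := by
    intro j q
    have hq := q.2
    apply hW
    · rw [hpos]; omega
    · rw [hpos, sum_filter_le_eq_add]; omega
  have hsurj : ∀ t : Fin (∑ i, r i), ∃ j, ∃ q : Fin (r j), finSigmaFinEquiv ⟨j, q⟩ = t :=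
    fun t => ⟨_, _, finSigmaFinEquiv.apply_symm_apply t⟩
  have huniq : ∀ c i j, c ∈ S i → c ∈ S j → i = j := by
    intro c i j hi hj
    by_contra hne
    have hmem := Finset.mem_inter.2 ⟨hi, hj⟩
    rw [hSdisj i j hne] at hmem
    simp at hmem
  refine ⟨fun c => ⟨?_, ?_⟩, ?_, fun β => ⟨?_, ?_⟩⟩
  · by_cases hc : ∃ j, c ∈ S j
    · obtain ⟨j, hj⟩ := hc
      have hsub : Finset.univ.filter (fun t => c ∈ W t)
          ⊆ Finset.univ.image (fun q : Fin (r j) => finSigmaFinEquiv ⟨j, q⟩) := by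
        intro t ht
        obtain ⟨i, q, rfl⟩ := hsurj t
        rw [Finset.mem_filter, hWe] at ht
        obtain rfl := huniq c i j ht.2 hj
        exact Finset.mem_image_of_mem _ (Finset.mem_univ q)
      calc _ ≤ _ := Finset.card_le_card hsub
        _ ≤ (Finset.univ : Finset (Fin (r j))).card := Finset.card_image_le
        _ = r j := by simp
        _ ≤ f := hrf j
    · rw [Finset.filter_false_of_mem]
      · simp
      · intro t _ ht
        obtain ⟨i, q, rfl⟩ := hsurj t
        rw [hWe] at ht
        exact hc ⟨i, ht⟩
  · intro a b x ha hb hax hxb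
    obtain ⟨i, p, rfl⟩ := hsurj a
    obtain ⟨j, q, rfl⟩ := hsurj b
    rw [hWe] at ha hb
    obtain rfl := huniq c i j ha hb
    have hq := q.2
    rw [Fin.le_def, hpos] at hax hxb
    -- `x` lies between two positions of block `i`, hence in block `i`.
    rw [hW x i (by omega) (by rw [sum_filter_le_eq_add]; omega)]
    exact ha
  · intro t
    obtain ⟨j, q, rfl⟩ := hsurj t
    rw [hWe, hScard]
  · rw [← finSigmaFinEquiv.sum_comp, Fintype.sum_sigma]
    simp [hWe]
  · congr 1
    ext v
    constructor
    · rintro ⟨t, rfl⟩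
      obtain ⟨j, q, rfl⟩ := hsurj t
      exact ⟨j, by simp only [hWe]⟩
    · rintro ⟨j, rfl⟩
      exact ⟨finSigmaFinEquiv ⟨j, ⟨0, hr1 j⟩⟩, by simp only [hWe]⟩
end

section
/- (Intermediate-committee substitution step of the FPT(m) algorithm.) Let m, τ, k, f be natural numbers with f ≥ 1, and let W : Fin τ → Finset (Fin m) be a consecutive f-frequency committee series with committee size k. Fix an index x : Fin τ and set P := W' ∩ W'', where W' is W (x − 1) if (x : ℕ) ≥ 1 and ∅ otherwise, and W'' is W (x + 1) if (x : ℕ) + 1 < τ and ∅ otherwise. Let F : Finset (Fin m) be disjoint from ⋃ i, W i with F.card = k − P.card. Then the series W₁ defined by W₁ x = P ∪ F and W₁ i = W i for every i ≠ x is again a consecutive f-frequency committee series of length τ with committee size k, and its utilitarian quality equals ∑ i, β (W i) − β (W x) + β (P ∪ F) for every committee scoring function β. -/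
/-- Intermediate-committee substitution: replacing the committee at position `x` of a
consecutive `f`-frequency series by `P ∪ F`, where `P` is the intersection of the two
neighboring committees (or `∅` at a boundary) and `F` consists of `k - |P|` fresh
candidates, yields again a consecutive `f`-frequency series with committee size `k`,
and its utilitarian quality is `∑ i, β (W i) - β (W x) + β (P ∪ F)`. -/
theorem intermediate_substitution {m τ k f : ℕ} (hf : 1 ≤ f)
    (W : Fin τ → Finset (Fin m))
    (hfreq : ConsecutiveFrequency f W) (hcard : ∀ i, (W i).card = k)
    (x : Fin τ) (P : Finset (Fin m))
    (hP : P =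
      (if 1 ≤ (x : ℕ) then
          W ⟨(x : ℕ) - 1, Nat.lt_of_le_of_lt (Nat.sub_le _ _) x.isLt⟩ else ∅) ∩
      (if h : (x : ℕ) + 1 < τ then W ⟨(x : ℕ) + 1, h⟩ else ∅))
    (F : Finset (Fin m)) (hFdisj : ∀ i, F ∩ W i = ∅) (hFcard : F.card = k - P.card)
    (W₁ : Fin τ → Finset (Fin m))
    (hW₁x : W₁ x = P ∪ F) (hW₁ : ∀ i, i ≠ x → W₁ i = W i)
    (β : Finset (Fin m) → ℕ) :
    ConsecutiveFrequency f W₁ ∧ (∀ i, (W₁ i).card = k) ∧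
    (∑ i, β (W₁ i)) = (∑ i, β (W i)) - β (W x) + β (P ∪ F) := by
  -- Membership in `P` says exactly that both neighbours exist and contain the candidate.
  have hmem : ∀ c, c ∈ P ↔
      (1 ≤ (x : ℕ) ∧ c ∈ W ⟨(x : ℕ) - 1, Nat.lt_of_le_of_lt (Nat.sub_le _ _) x.isLt⟩) ∧
        ∃ h : (x : ℕ) + 1 < τ, c ∈ W ⟨(x : ℕ) + 1, h⟩ := by
    intro c
    rw [hP, Finset.mem_inter]
    refine and_congr ?_ ?_ <;> split_ifs with h <;> simp [h]
  have hPW : P ⊆ W x := by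
    intro c hc
    obtain ⟨⟨_, h1⟩, h, h2⟩ := (hmem c).1 hc
    exact (hfreq c).2 _ _ x h1 h2 (Fin.le_def.2 (by simp)) (Fin.le_def.2 (by simp))
  have hFW : ∀ c ∈ F, ∀ i, c ∉ W i := by
    intro c hc i hi
    have : c ∈ F ∩ W i := Finset.mem_inter.2 ⟨hc, hi⟩
    simp [hFdisj i] at this
  have hFx : ∀ c ∈ F, ∀ i, c ∈ W₁ i → i = x := by
    intro c hc i hi
    by_contra hne
    exact hFW c hc i (hW₁ i hne ▸ hi)
  have hold : ∀ c, c ∉ F → ∀ i, c ∈ W₁ i → c ∈ W i := by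
    intro c hc i hi
    by_cases hix : i = x
    · subst hix
      rw [hW₁x, Finset.mem_union] at hi
      exact hPW (hi.resolve_right hc)
    · exact hW₁ i hix ▸ hi
  refine ⟨fun c => ⟨?_, ?_⟩, ?_, ?_⟩
  · by_cases hc : c ∈ F
    · refine le_trans (Finset.card_le_one.2 ?_) hf
      intro a ha b hb
      rw [hFx c hc a (Finset.mem_filter.1 ha).2, hFx c hc b (Finset.mem_filter.1 hb).2]
    · refine le_trans (Finset.card_le_card ?_) (hfreq c).1
      intro i hi
      exact Finset.mem_filter.2 ⟨Finset.mem_univ _, hold c hc i (Finset.mem_filter.1 hi).2⟩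
  · intro a b y ha hb hay hyb
    by_cases hc : c ∈ F
    · have h1 := hFx c hc a ha
      have h2 := hFx c hc b hb
      have hya : y = a := le_antisymm (by rw [h1, ← h2]; exact hyb) hay
      rwa [hya]
    · have ha' := hold c hc a ha
      have hb' := hold c hc b hb
      by_cases hyx : y = x
      · subst hyx
        rcases eq_or_lt_of_le hay with rfl | hay'
        · exact ha
        rcases eq_or_lt_of_le hyb with rfl | hyb'
        · exact hb
        -- Now `a < y < b`, so both neighbours of `y` exist and lie between `a` and `b`.
        rw [Fin.lt_def] at hay' hyb'
        rw [hW₁x, Finset.mem_union]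
        refine Or.inl ((hmem c).2 ⟨⟨by omega, ?_⟩, by omega, ?_⟩)
        · exact (hfreq c).2 a b _ ha' hb' (Fin.le_def.2 (by simp only; omega))
            (Fin.le_def.2 (by simp only; omega))
        · exact (hfreq c).2 a b _ ha' hb' (Fin.le_def.2 (by simp only; omega))
            (Fin.le_def.2 (by simp only; omega))
      · rw [hW₁ y hyx]
        exact (hfreq c).2 a b y ha' hb' hay hyb
  · intro i
    by_cases hix : i = x
    · subst hix
      have hle : P.card ≤ k := hcard i ▸ Finset.card_le_card hPW
      rw [hW₁x, Finset.card_union_of_disjoint, hFcard]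
      · omega
      · exact Finset.disjoint_left.2 fun c hcP hcF => hFW c hcF i (hPW hcP)
    · rw [hW₁ i hix, hcard i]
  · rw [← Finset.add_sum_erase _ (fun i => β (W₁ i)) (Finset.mem_univ x),
      ← Finset.add_sum_erase _ (fun i => β (W i)) (Finset.mem_univ x)]
    have : ∑ i ∈ Finset.univ.erase x, β (W₁ i) = ∑ i ∈ Finset.univ.erase x, β (W i) :=
      Finset.sum_congr rfl fun i hi => by rw [hW₁ i (Finset.ne_of_mem_erase hi)]
    simp only [this, hW₁x]
    omega
end

section
/- (Lemma: for each instance there is a division whose space contains an optimal committee series.) Let m, k, f, τ be natural numbers with k ≥ 1, f ≥ 1, τ ≥ 1, let β : Finset (Fin m) → ℕ be a committee scoring function, and let W : Fin τ → Finset (Fin m) be any consecutive f-frequency committee series of length τ with committee size k. Then there exist a size d ≥ 1, a division (ρ, 𝒮, ℱ) of size d for committee size k, and multiplicities r, u : Fin d → ℕ with r i ≥ 1 for all i, u i = 0 whenever ℱ i = ∅, and ∑ i, (r i + u i) = τ, such that the induced series W' of (ρ, 𝒮, ℱ, r, u) is itself a consecutive f-frequency committee series of length τ with committee size k and has utilitarian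 quality ∑ i, β (W' i) ≥ ∑ i, β (W i). In particular, some division's space contains a committee series maximizing the utilitarian quality among all consecutive f-frequency series of length τ with committee size k. -/
/-- `X` is an interval with respect to the order `ρ` (where `ρ j` is the candidate in
position `j`): the set of positions of members of `X` is consecutive. -/
def IsRhoInterval {m : ℕ} (ρ : Equiv.Perm (Fin m)) (X : Finset (Fin m)) : Prop :=
  ∀ a b x : Fin m, ρ a ∈ X → ρ b ∈ X → a ≤ x → x ≤ b → ρ x ∈ X

/-- The position (with respect to `ρ`) of the leftmost candidate of `X`. -/
noncomputable def begOf {m : ℕ} (ρ : Equiv.Perm (Fin m)) (X : Finset (Fin m)) : ℕ :=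
  sInf {j : ℕ | ∃ h : j < m, ρ ⟨j, h⟩ ∈ X}

/-- A division of size `d` for committee size `k`: an order `ρ` of the candidates,
primitives `S` and interim candidate sets `F` satisfying conditions (a)–(g). -/
def IsDivision {m : ℕ} (k d : ℕ) (ρ : Equiv.Perm (Fin m))
    (S F : Fin d → Finset (Fin m)) : Prop :=
  (∀ i, (S i).card = k ∧ IsRhoInterval ρ (S i)) ∧
  (∀ i : Fin d, ∀ h : (i : ℕ) + 1 < d, begOf ρ (S i) < begOf ρ (S ⟨(i : ℕ) + 1, h⟩)) ∧
  (∀ i : Fin d, (i : ℕ) = d - 1 → F i = ∅) ∧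
  (∀ i j : Fin d, i ≠ j → F i ∩ F j = ∅) ∧
  (∀ i : Fin d, ∀ h : (i : ℕ) + 1 < d,
      (F i).card = 0 ∨ (F i).card = k - (S i ∩ S ⟨(i : ℕ) + 1, h⟩).card) ∧
  (∀ i : Fin d, ∀ h : (i : ℕ) + 1 < d, S i ∩ S ⟨(i : ℕ) + 1, h⟩ = ∅ → F i = ∅) ∧
  (∀ i j : Fin d, F i ∩ S j = ∅)

/-- The successor primitive of `S i` (or `∅` if `i` is the last index). -/
def nextS {m d : ℕ} (S : Fin d → Finset (Fin m)) (i : Fin d) : Finset (Fin m) :=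
  if h : (i : ℕ) + 1 < d then S ⟨(i : ℕ) + 1, h⟩ else ∅

/-- `W` is the series induced by the division data `(S, F)` with multiplicities `(r, u)`:
it is the concatenation, for `j = 0, …, d-1` in order, of `r j` copies of the primitive
`S j` followed by `u j` copies of the intermediate committee `(S j ∩ S (j+1)) ∪ F j`. -/
def InducedSeries {m d τ : ℕ} (S F : Fin d → Finset (Fin m)) (r u : Fin d → ℕ)
    (W : Fin τ → Finset (Fin m)) : Prop :=
  ∀ (t : Fin τ) (j : Fin d),
    ((∑ i ∈ Finset.univ.filter (fun i => i < j), (r i + u i)) ≤ (t : ℕ) ∧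
        (t : ℕ) < (∑ i ∈ Finset.univ.filter (fun i => i < j), (r i + u i)) + r j →
      W t = S j) ∧
    ((∑ i ∈ Finset.univ.filter (fun i => i < j), (r i + u i)) + r j ≤ (t : ℕ) ∧
        (t : ℕ) < (∑ i ∈ Finset.univ.filter (fun i => i < j), (r i + u i)) + r j + u j →
      W t = (S j ∩ nextS S j) ∪ F j)

/-! ### Divisions from a key -/

lemma begOf_le {m : ℕ} (ρ : Equiv.Perm (Fin m)) (X : Finset (Fin m)) (a : Fin m)
    (h : ρ a ∈ X) : begOf ρ X ≤ a :=
  Nat.sInf_le ⟨a.2, h⟩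

lemma exists_begOf {m : ℕ} (ρ : Equiv.Perm (Fin m)) (X : Finset (Fin m)) (hX : X.Nonempty) :
    ∃ a : Fin m, (a : ℕ) = begOf ρ X ∧ ρ a ∈ X := by
  obtain ⟨c, hc⟩ := hX
  have hne : {j : ℕ | ∃ h : j < m, ρ ⟨j, h⟩ ∈ X}.Nonempty :=
    ⟨(ρ.symm c : Fin m), (ρ.symm c).2, by simpa using hc⟩
  obtain ⟨h, hmem⟩ := Nat.sInf_mem hne
  exact ⟨⟨_, h⟩, rfl, hmem⟩

/-- If every committee of `V` is a window `[2 * j, 2 * j + 2]` of the key `g`, with windows moving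
to the right over time, then `V` is induced by a division with empty interim sets, whose order
sorts the candidates by `g`. -/
lemma exists_division_of_key {m k τ : ℕ} (hk : 1 ≤ k) (hτ : 1 ≤ τ)
    (V : Fin τ → Finset (Fin m)) (hcard : ∀ t, (V t).card = k)
    (g : Fin m → ℕ) (J : Fin τ → ℕ) (hJ : Monotone J)
    (hV : ∀ t c, c ∈ V t ↔ 2 * J t ≤ g c ∧ g c ≤ 2 * J t + 2) :
    ∃ (d : ℕ), 1 ≤ d ∧
      ∃ (ρ : Equiv.Perm (Fin m)) (S F : Fin d → Finset (Fin m)) (r u : Fin d → ℕ),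
        IsDivision k d ρ S F ∧ (∀ i, 1 ≤ r i) ∧ (∀ i, F i = ∅ → u i = 0) ∧
        (∑ i, (r i + u i)) = τ ∧ InducedSeries S F r u V := by
  classical
  set ρ : Equiv.Perm (Fin m) := Tuple.sort g with hρ
  have hg : ∀ a b, a ≤ b → g (ρ a) ≤ g (ρ b) := fun a b h => Tuple.monotone_sort g h
  set b : Fin τ → ℕ := fun t => begOf ρ (V t) with hb
  -- Of two distinct committees of equal size, the earlier one has a candidate outside the later
  -- one, and by the key this candidate precedes every candidate of the later committee.
  have key : ∀ s t, s ≤ t → V s = V t ∨ b s < b t := by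
    intro s t hst
    by_cases h : V s = V t
    · exact Or.inl h
    right
    have hns : ¬ V s ⊆ V t := fun h' =>
      h (Finset.eq_of_subset_of_card_le h' (by rw [hcard, hcard]))
    obtain ⟨x, hxs, hxt⟩ := Finset.not_subset.mp hns
    obtain ⟨a, ha, haV⟩ := exists_begOf ρ (V t) (Finset.card_pos.mp (by rw [hcard]; omega))
    have h1 : b s ≤ (ρ.symm x : Fin m) := begOf_le ρ _ _ (by simpa using hxs)
    have h2 : ρ.symm x < a := by
      by_contra hcon
      have h3 := hg a (ρ.symm x) (not_lt.mp hcon)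
      rw [Equiv.apply_symm_apply] at h3
      rw [hV] at hxs hxt haV
      have := hJ hst
      omega
    have h3 : ((ρ.symm x : Fin m) : ℕ) < (a : ℕ) := h2
    change b s < begOf ρ (V t)
    omega
  have bmono : ∀ s t, s ≤ t → b s ≤ b t := by
    intro s t hst
    rcases key s t hst with h | h
    · simp [hb, h]
    · exact h.le
  have binj : ∀ s t, b s = b t → V s = V t := by
    intro s t hst
    rcases le_total s t with h | h
    · exact (key s t h).resolve_right (by omega)
    · exact ((key t s h).resolve_right (by omega)).symm
  set B : Finset ℕ := Finset.univ.image b with hB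
  set e := B.orderEmbOfFin rfl with he
  have hex : ∀ i : Fin B.card, ∃ t, b t = e i := by
    intro i
    obtain ⟨t, -, ht⟩ := Finset.mem_image.mp (B.orderEmbOfFin_mem rfl i)
    exact ⟨t, ht⟩
  choose T hT using hex
  have hmem : ∀ t, ∃ i, e i = b t := by
    intro t
    have : b t ∈ Set.range (B.orderEmbOfFin rfl) := by
      rw [Finset.range_orderEmbOfFin]; simp [hB]
    exact this
  -- The number of times in the blocks selected by `p` is counted fibrewise along `b`.
  have hsum : ∀ (p : Fin B.card → Prop) [DecidablePred p],
      ∑ i ∈ Finset.univ.filter p, ((Finset.univ.filter (fun t => b t = e i)).card + 0)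
        = (Finset.univ.filter (fun t => ∃ i, p i ∧ b t = e i)).card := by
    intro p _
    rw [show (Finset.univ.filter (fun t => ∃ i, p i ∧ b t = e i)) =
      (Finset.univ.filter p).biUnion (fun i => Finset.univ.filter (fun t => b t = e i)) by
        ext t; simp]
    rw [Finset.card_biUnion]
    · simp
    · intro i _ j _ hij
      rw [Function.onFun, Finset.disjoint_left]
      intro t h1 h2
      simp only [Finset.mem_filter, Finset.mem_univ, true_and] at h1 h2
      exact hij (e.injective (h1.symm.trans h2))
  refine ⟨B.card, ?_, ρ, fun i => V (T i), fun _ => ∅,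
    fun i => (Finset.univ.filter (fun t => b t = e i)).card, fun _ => 0, ?_, ?_, ?_, ?_, ?_⟩
  · exact Finset.card_pos.mpr ⟨b ⟨0, hτ⟩, by simp [hB]⟩
  · refine ⟨fun i => ⟨hcard _, ?_⟩, ?_, ?_, ?_, ?_, ?_, ?_⟩
    · intro x y z hx hy hxz hzy
      rw [hV] at hx hy ⊢
      have := hg _ _ hxz
      have := hg _ _ hzy
      omega
    · intro i h
      change b (T i) < b (T _)
      rw [hT, hT]
      exact e.strictMono (Fin.lt_def.mpr (Nat.lt_succ_self _))
    all_goals simp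
  · intro i
    exact Finset.card_pos.mpr ⟨T i, by simp [hT]⟩
  · simp
  · have h := hsum (fun _ => True)
    rw [Finset.filter_true] at h
    rw [h, Finset.filter_true_of_mem, Finset.card_univ, Fintype.card_fin]
    intro t _
    obtain ⟨i, hi⟩ := hmem t
    exact ⟨i, trivial, hi.symm⟩
  · intro t j
    constructor
    · rintro ⟨h1, h2⟩
      rw [hsum (fun i => i < j)] at h1 h2
      apply binj
      rw [hT]
      have hlt : ∀ s, (∃ i, i < j ∧ b s = e i) ↔ b s < e j := by
        intro s
        constructor
        · rintro ⟨i, hi, h⟩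
          rw [h]; exact e.strictMono hi
        · intro h
          obtain ⟨i, hi⟩ := hmem s
          exact ⟨i, e.lt_iff_lt.mp (by rw [hi]; exact h), hi.symm⟩
      simp only [hlt] at h1 h2
      rcases lt_trichotomy (b t) (e j) with h | h | h
      · exfalso
        have hsub : Finset.Iic t ⊆ Finset.univ.filter (fun s => b s < e j) := by
          intro s hs
          have := bmono s t (Finset.mem_Iic.mp hs)
          simp only [Finset.mem_filter, Finset.mem_univ, true_and]
          omega
        have := Finset.card_le_card hsub
        rw [Fin.card_Iic] at this
        omega
      · exact h
      · exfalso
        rw [← Finset.card_union_of_disjoint] at h2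
        · have hsub : Finset.univ.filter (fun s => b s < e j) ∪
              Finset.univ.filter (fun s => b s = e j) ⊆ Finset.Iio t := by
            intro s hs
            simp only [Finset.mem_union, Finset.mem_filter, Finset.mem_univ, true_and] at hs
            rw [Finset.mem_Iio]
            by_contra hcon
            have := bmono t s (not_lt.mp hcon)
            omega
          have := Finset.card_le_card hsub
          rw [Fin.card_Iio] at this
          omega
        · rw [Finset.disjoint_left]
          intro s h3 h4
          simp only [Finset.mem_filter, Finset.mem_univ, true_and] at h3 h4
          omega
    · rintro ⟨h1, h2⟩
      exact absurd h2 (not_lt.mpr h1)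

/-- If blocks at distance at least two are disjoint, there is a key for which block `j` is the
window `[2 * j, 2 * j + 2]`: candidates only in block `j` get `2 * j + 1`, candidates in blocks
`j` and `j + 1` get `2 * j + 2`, and unused candidates a value beyond all windows up to `N`. -/
lemma exists_key {m : ℕ} (P : ℕ → Finset (Fin m)) (N : ℕ)
    (hP : ∀ j l c, j + 2 ≤ l → c ∈ P j → c ∉ P l) :
    ∃ g : Fin m → ℕ, ∀ j ≤ N, ∀ c, c ∈ P j ↔ 2 * j ≤ g c ∧ g c ≤ 2 * j + 2 := by
  have : ∀ c : Fin m, ∃ v : ℕ, ∀ j ≤ N, c ∈ P j ↔ 2 * j ≤ v ∧ v ≤ 2 * j + 2 := by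
    classical
    intro c
    by_cases h : ∃ j, c ∈ P j
    · set j₀ := Nat.find h with hj₀
      have h0 : c ∈ P j₀ := Nat.find_spec h
      have hmin : ∀ j, c ∈ P j → j₀ ≤ j := fun j hj => Nat.find_min' h hj
      have hmax : ∀ j, c ∈ P j → j ≤ j₀ + 1 := by
        intro j hj
        by_contra hcon
        exact hP j₀ j c (by omega) h0 hj
      by_cases h1 : c ∈ P (j₀ + 1)
      · refine ⟨2 * j₀ + 2, fun j _ => ⟨fun hj => ?_, fun hj => ?_⟩⟩
        · have := hmin j hj
          have := hmax j hj
          omega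
        · rcases (show j = j₀ ∨ j = j₀ + 1 by omega) with rfl | rfl
          · exact h0
          · exact h1
      · refine ⟨2 * j₀ + 1, fun j _ => ⟨fun hj => ?_, fun hj => ?_⟩⟩
        · have := hmin j hj
          have := hmax j hj
          have : j ≠ j₀ + 1 := by rintro rfl; exact h1 hj
          omega
        · obtain rfl : j = j₀ := by omega
          exact h0
    · refine ⟨2 * N + 3, fun j hj => ⟨fun h' => absurd ⟨j, h'⟩ h, fun h' => ?_⟩⟩
      omega
  choose g hg using this
  exact ⟨g, fun j hj c => hg c j hj⟩

/-! ### Averaging over residues -/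

lemma sum_range_residues (h : ℕ → ℕ) (f q r : ℕ) (hr : r ≤ f) :
    ∑ n ∈ Finset.range (q * f + r), h n =
      ∑ s ∈ Finset.range r, ∑ i ∈ Finset.range (q + 1), h (i * f + s) +
      ∑ s ∈ Finset.Ico r f, ∑ i ∈ Finset.range q, h (i * f + s) := by
  have h1 : ∀ q, ∑ n ∈ Finset.range (q * f), h n =
      ∑ i ∈ Finset.range q, ∑ s ∈ Finset.range f, h (i * f + s) := by
    intro q
    induction q with
    | zero => simp
    | succ q ih => rw [Nat.succ_mul, Finset.sum_range_add, ih, Finset.sum_range_succ]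
  rw [Finset.sum_range_add, h1, Finset.sum_comm, ← Finset.sum_range_add_sum_Ico _ hr]
  simp only [Finset.sum_range_succ, Finset.sum_add_distrib]
  ring

/-- A maximizer `c` of `A` on `[a, b)`, with the convention `c = a` if the interval is empty. -/
lemma exists_max_Ico (A : ℕ → ℕ) (a b : ℕ) :
    ∃ c, a ≤ c ∧ (a < b → c < b) ∧ (b ≤ a → c = a) ∧
      ∀ s ∈ Finset.Ico a b, A s ≤ A c := by
  by_cases h : a < b
  · obtain ⟨c, hc, hmax⟩ := Finset.exists_max_image (Finset.Ico a b) A ⟨a, by simp [h]⟩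
    rw [Finset.mem_Ico] at hc
    exact ⟨c, hc.1, fun _ => hc.2, fun h' => by omega, hmax⟩
  · refine ⟨a, le_rfl, fun h' => absurd h' h, fun _ => rfl, fun s hs => ?_⟩
    rw [Finset.mem_Ico] at hs
    omega

/-- In a consecutive `f`-frequency series, committees at distance at least `f` are disjoint. -/
lemma ConsecutiveFrequency.not_mem_of_le {m τ f : ℕ} {W : Fin τ → Finset (Fin m)}
    (hW : ConsecutiveFrequency f W) (a b : Fin τ) (hab : (a : ℕ) + f ≤ b) (c : Fin m)
    (ha : c ∈ W a) : c ∉ W b := by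
  intro hb
  have hsub : Finset.Icc a b ⊆ Finset.univ.filter (fun i => c ∈ W i) := by
    intro x hx
    rw [Finset.mem_Icc] at hx
    simpa using (hW c).2 a b x ha hb hx.1 hx.2
  have h1 := (Finset.card_le_card hsub).trans (hW c).1
  rw [Fin.card_Icc] at h1
  omega

/-- For every consecutive `f`-frequency committee series there is a division whose space
contains a series of at least the same utilitarian quality; in particular, some
division's space contains an optimal series. -/
theorem division_space {m k f τ : ℕ} (hk : 1 ≤ k) (hf : 1 ≤ f) (hτ : 1 ≤ τ)
    (β : Finset (Fin m) → ℕ)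
    (W : Fin τ → Finset (Fin m))
    (hWfreq : ConsecutiveFrequency f W) (hWcard : ∀ i, (W i).card = k) :
    ∃ (d : ℕ), 1 ≤ d ∧
      ∃ (ρ : Equiv.Perm (Fin m)) (S F : Fin d → Finset (Fin m))
        (r u : Fin d → ℕ) (W' : Fin τ → Finset (Fin m)),
        IsDivision k d ρ S F ∧
        (∀ i, 1 ≤ r i) ∧
        (∀ i, F i = ∅ → u i = 0) ∧
        (∑ i, (r i + u i)) = τ ∧
        InducedSeries S F r u W' ∧
        ConsecutiveFrequency f W' ∧
        (∀ i, (W' i).card = k) ∧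
        (∑ i, β (W i)) ≤ ∑ i, β (W' i) := by
  classical
  set q := τ / f with hq
  set r := τ % f with hr
  have hτe : q * f + r = τ := by rw [hq, hr, mul_comm]; exact Nat.div_add_mod τ f
  have hrf : r < f := Nat.mod_lt _ hf
  -- `w` extends `W` by empty committees after the time `τ`.
  set w : ℕ → Finset (Fin m) := fun n => if h : n < τ then W ⟨n, h⟩ else ∅ with hw
  have hwlt : ∀ n c, c ∈ w n → n < τ := by
    intro n c hc
    by_contra h
    simp [hw, h] at hc
  have hwW : ∀ n (h : n < τ), w n = W ⟨n, h⟩ := fun n h => by simp [hw, h]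
  have hwdisj : ∀ a b c, a + f ≤ b → c ∈ w a → c ∉ w b := by
    intro a b c hab ha hb
    have h1 := hwlt _ _ ha
    have h2 := hwlt _ _ hb
    rw [hwW _ h1] at ha
    rw [hwW _ h2] at hb
    exact hWfreq.not_mem_of_le ⟨a, h1⟩ ⟨b, h2⟩ hab c ha hb
  have hwcons : ∀ a b x c, c ∈ w a → c ∈ w b → a ≤ x → x ≤ b → c ∈ w x := by
    intro a b x c ha hb hax hxb
    have h1 := hwlt _ _ ha
    have h2 := hwlt _ _ hb
    rw [hwW _ h1] at ha
    rw [hwW _ h2] at hb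
    rw [hwW x (by omega)]
    exact (hWfreq c).2 _ _ _ ha hb hax hxb
  obtain ⟨c₁, -, hc₁r, hc₁0, hc₁max⟩ :=
    exists_max_Ico (fun s => ∑ i ∈ Finset.range (q + 1), β (w (i * f + s))) 0 r
  obtain ⟨c₂, hc₂r, hc₂f, -, hc₂max⟩ :=
    exists_max_Ico (fun s => ∑ i ∈ Finset.range q, β (w (i * f + s))) r f
  have hc₂f := hc₂f hrf
  have hc₁₂ : c₁ ≤ c₂ := by
    rcases Nat.eq_zero_or_pos r with h | h
    · have := hc₁0 (by omega)
      omega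
    · have := hc₁r h
      omega
  -- Block number of a time, and the time at which a block number samples `W`.
  set J : ℕ → ℕ := fun t => 2 * (t / f) + if t % f < r then 0 else 1 with hJ
  set idx : ℕ → ℕ := fun j => (j / 2) * f + if j % 2 = 0 then c₁ else c₂ with hidx
  have hJmono : Monotone J := by
    intro s t hst
    have h1 : s / f ≤ t / f := Nat.div_le_div_right hst
    have hs := Nat.div_add_mod s f
    have ht := Nat.div_add_mod t f
    simp only [hJ]
    rcases h1.lt_or_eq with h | h
    · split_ifs <;> omega
    · rw [h] at hs ⊢
      split_ifs <;> omega
  have hidxmono : Monotone idx := by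
    refine monotone_nat_of_le_succ fun j => ?_
    simp only [hidx]
    rcases Nat.mod_two_eq_zero_or_one j with h | h
    · have h1 : (j + 1) / 2 = j / 2 := by omega
      have h2 : (j + 1) % 2 = 1 := by omega
      simp [h, h1, h2, hc₁₂]
    · have h1 : (j + 1) / 2 = j / 2 + 1 := by omega
      have h2 : (j + 1) % 2 = 0 := by omega
      simp only [h, h1, h2, Nat.succ_mul]
      simp
      omega
  have hidx2 : ∀ j, idx (j + 2) = idx j + f := by
    intro j
    have h1 : (j + 2) / 2 = j / 2 + 1 := by omega
    have h2 : (j + 2) % 2 = j % 2 := by omega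
    simp only [hidx, h1, h2, Nat.succ_mul]
    omega
  have hJf : ∀ t, J (t + f) = J t + 2 := by
    intro t
    simp only [hJ, Nat.add_div_right t hf, Nat.add_mod_right]
    ring
  have hidxJ : ∀ i s, s < f → idx (J (i * f + s)) = i * f + if s < r then c₁ else c₂ := by
    intro i s hs
    have h1 : (i * f + s) / f = i := by
      rw [mul_comm, Nat.mul_add_div hf, Nat.div_eq_of_lt hs, add_zero]
    have h2 : (i * f + s) % f = s := by
      rw [mul_comm, Nat.mul_add_mod, Nat.mod_eq_of_lt hs]
    simp only [hJ, h1, h2, hidx]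
    split_ifs with h <;> first | omega | simp
    exact Or.inl (by omega)
  have hlt : ∀ t < τ, idx (J t) < τ := by
    intro t ht
    have hs : t % f < f := Nat.mod_lt _ hf
    have h1 : t / f * f + t % f = t := by rw [mul_comm]; exact Nat.div_add_mod t f
    have h2 := hidxJ (t / f) (t % f) hs
    rw [h1] at h2
    rw [h2]
    split_ifs with h
    · have := hc₁r (by omega)
      have h3 : t / f * f ≤ q * f := Nat.mul_le_mul_right _ (Nat.div_le_div_right ht.le)
      omega
    · have h3 : t / f < q := by
        by_contra hcon
        have : q * f ≤ t / f * f := Nat.mul_le_mul_right _ (not_lt.mp hcon)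
        omega
      have h4 : (t / f + 1) * f ≤ q * f := Nat.mul_le_mul_right _ h3
      rw [Nat.succ_mul] at h4
      omega
  set W' : Fin τ → Finset (Fin m) := fun t => w (idx (J t)) with hW'
  have hcard' : ∀ t, (W' t).card = k := by
    intro t
    simp only [hW']
    rw [hwW _ (hlt t t.2), hWcard]
  have hfreq' : ConsecutiveFrequency f W' := by
    intro c
    refine ⟨?_, fun a b x ha hb hax hxb => ?_⟩
    · rcases (Finset.univ.filter (fun i => c ∈ W' i)).eq_empty_or_nonempty with h | h
      · simp [h]
      -- All occurrences of `c` lie within `f` steps of the first one.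
      · set a := (Finset.univ.filter (fun i => c ∈ W' i)).min' h with ha
        have haW : c ∈ W' a := by
          have := Finset.min'_mem _ h
          rw [Finset.mem_filter] at this
          exact this.2
        have hinj : ((Finset.univ.filter (fun i => c ∈ W' i)).map Fin.valEmbedding) ⊆
            Finset.Ico (a : ℕ) (a + f) := by
          intro n hn
          rw [Finset.mem_map] at hn
          obtain ⟨t, ht, rfl⟩ := hn
          have h1 : a ≤ t := Finset.min'_le _ _ ht
          rw [Finset.mem_filter] at ht
          rw [Finset.mem_Ico]
          refine ⟨h1, ?_⟩
          by_contra hcon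
          have h2 : idx (J (a + f)) ≤ idx (J t) := hidxmono (hJmono (not_lt.mp hcon))
          rw [hJf, hidx2] at h2
          exact hwdisj _ _ c h2 haW ht.2
        have := Finset.card_le_card hinj
        rw [Finset.card_map, Nat.card_Ico] at this
        omega
    · exact hwcons _ _ _ c ha hb (hidxmono (hJmono hax)) (hidxmono (hJmono hxb))
  have hqual : (∑ i, β (W i)) ≤ ∑ i, β (W' i) := by
    have e1 : (∑ i, β (W i)) = ∑ n ∈ Finset.range τ, β (w n) := by
      rw [← Fin.sum_univ_eq_sum_range (fun n => β (w n))]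
      exact Finset.sum_congr rfl fun i _ => by rw [hwW _ i.2]
    have e2 : (∑ i, β (W' i)) = ∑ n ∈ Finset.range τ, β (w (idx (J n))) := by
      rw [← Fin.sum_univ_eq_sum_range (fun n => β (w (idx (J n))))]
    rw [e1, e2, ← hτe, sum_range_residues _ f q r hrf.le, sum_range_residues _ f q r hrf.le]
    refine add_le_add (Finset.sum_le_sum fun s hs => ?_) (Finset.sum_le_sum fun s hs => ?_)
    · rw [Finset.mem_range] at hs
      refine (hc₁max s (by simp [hs])).trans (le_of_eq ?_)
      refine Finset.sum_congr rfl fun i _ => ?_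
      rw [hidxJ i s (by omega), if_pos hs]
    · refine (hc₂max s hs).trans (le_of_eq ?_)
      rw [Finset.mem_Ico] at hs
      refine Finset.sum_congr rfl fun i _ => ?_
      rw [hidxJ i s hs.2, if_neg (by omega)]
  obtain ⟨g, hg⟩ := exists_key (fun j => w (idx j)) (J τ) (by
    intro j l c hjl hj
    refine hwdisj _ _ c ?_ hj
    rw [← hidx2]
    exact hidxmono hjl)
  obtain ⟨d, hd, ρ, S, F, r', u, h1, h2, h3, h4, h5⟩ :=
    exists_division_of_key hk hτ W' hcard' g (fun t => J t) (fun s t hst => hJmono hst)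
      (fun t c => hg (J t) (hJmono t.2.le) c)
  exact ⟨d, hd, ρ, S, F, r', u, W', h1, h2, h3, h4, h5, hfreq', hcard', hqual⟩
end

section
/- (Forward correctness claim for the polynomial-multiplication algorithm, utilitarian case.) Fix m, k ≥ 1 and a committee scoring function β : Finset (Fin m) → ℕ, and let p[s,j,ℓ] be the recursively defined polynomials described in the context. Then for all j ≥ 1 and all s, ℓ : ℕ: if p[s,j,ℓ] ≠ 0, then there exists a Finset 𝒮 of committees with 𝒮.card = j, whose members are pairwise disjoint and each of cardinality k, such that the union of the members of 𝒮 has cardinality s and ∑_{S ∈ 𝒮} β S ≥ ℓ. -/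
/-!
The induction on `j` tracks exponents: every exponent in the support of `p[s,j,ℓ]` is `chi` of
the union of a family of `j` pairwise disjoint committees as required.  In the inductive step an
exponent is `chi Y + chi U`, where `U` is the union of a family for `j - 1` and the Hamming weight
is `s = |Y| + |U|`.  This forces `Y` and `U` to be disjoint: the Hamming weight is subadditive and
powers of two have weight one, so if `i ∈ Y ∩ U`, merging the two copies of `2 ^ i` into
`2 ^ (i + 1)` shows that the weight is at most `|Y| + |U| - 1`
(`disjoint_of_hammingWeight_chi_add`).
-/

open Polynomial

/-- The characteristic-vector encoding of a set of candidates. -/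
def chi {m : ℕ} (Y : Finset (Fin m)) : ℕ := ∑ i ∈ Y, 2 ^ (i : ℕ)

/-- The Hamming weight of a natural number: the number of ones in its binary
representation. -/
def hammingWeight (e : ℕ) : ℕ := (Nat.digits 2 e).sum

/-- The Hamming projection of a polynomial to `s`: keep exactly the monomials whose
exponent has Hamming weight `s`. -/
noncomputable def hammingProj (s : ℕ) (p : Polynomial ℕ) : Polynomial ℕ :=
  ∑ e ∈ p.support.filter (fun e => hammingWeight e = s), C (p.coeff e) * X ^ e

/-- The representative polynomial: change all nonzero coefficients to `1`. -/
noncomputable def reprPoly (p : Polynomial ℕ) : Polynomial ℕ :=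
  ∑ e ∈ p.support, (X : Polynomial ℕ) ^ e

/-- The recursively defined polynomials `p[s,j,ℓ]` of the polynomial-multiplication
algorithm (utilitarian case), with the number `j` of committees as first argument. -/
noncomputable def polyP (m k : ℕ) (β : Finset (Fin m) → ℕ) :
    ℕ → ℕ → ℕ → Polynomial ℕ
  | 0, _, _ => 0
  | 1, s, ℓ =>
      if s = k then
        ∑ Y ∈ Finset.univ.filter (fun Y : Finset (Fin m) => Y.card = k ∧ ℓ ≤ β Y),
          (X : Polynomial ℕ) ^ chi Y
      else 0
  | (j + 2), s, ℓ =>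
      reprPoly (hammingProj s
        (∑ Y ∈ Finset.univ.filter (fun Y : Finset (Fin m) => Y.card = k),
          (X : Polynomial ℕ) ^ chi Y * polyP m k β (j + 1) (s - k) (ℓ - β Y)))

lemma hammingWeight_rec (n : ℕ) : hammingWeight n = n % 2 + hammingWeight (n / 2) := by
  rcases Nat.eq_zero_or_pos n with rfl | h
  · simp [hammingWeight]
  · unfold hammingWeight
    rw [Nat.digits_def' (by norm_num) h, List.sum_cons]

lemma hammingWeight_succ_le (n : ℕ) : hammingWeight (n + 1) ≤ hammingWeight n + 1 := by
  induction n using Nat.strong_induction_on with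
  | _ n ih =>
    rw [hammingWeight_rec (n + 1), hammingWeight_rec n]
    rcases Nat.mod_two_eq_zero_or_one n with h | h
    · have h1 : (n + 1) / 2 = n / 2 := by omega
      rw [h1]; omega
    · have h1 : (n + 1) / 2 = n / 2 + 1 := by omega
      have := ih (n / 2) (by omega)
      rw [h1]; omega

lemma hammingWeight_add_le (a b : ℕ) :
    hammingWeight (a + b) ≤ hammingWeight a + hammingWeight b := by
  induction a using Nat.strong_induction_on generalizing b with
  | _ a ih =>
    rcases Nat.eq_zero_or_pos a with rfl | ha
    · simp
    · have key := ih (a / 2) (by omega) (b / 2)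
      rw [hammingWeight_rec (a + b), hammingWeight_rec a, hammingWeight_rec b]
      by_cases h : a % 2 = 1 ∧ b % 2 = 1
      · have h1 : (a + b) / 2 = a / 2 + b / 2 + 1 := by omega
        have := hammingWeight_succ_le (a / 2 + b / 2)
        rw [h1]; omega
      · have h1 : (a + b) / 2 = a / 2 + b / 2 := by omega
        rw [h1]; omega

lemma hammingWeight_two_pow (i : ℕ) : hammingWeight (2 ^ i) = 1 := by
  induction i with
  | zero => simp [hammingWeight]
  | succ i ih =>
    rw [hammingWeight_rec]
    have h1 : 2 ^ (i + 1) % 2 = 0 := by omega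
    have h2 : 2 ^ (i + 1) / 2 = 2 ^ i := by omega
    rw [h1, h2, ih]

lemma hammingWeight_chi_le {m : ℕ} (Y : Finset (Fin m)) : hammingWeight (chi Y) ≤ Y.card := by
  induction Y using Finset.induction_on with
  | empty => simp [chi, hammingWeight]
  | insert i Y hi ih =>
    have h : chi (insert i Y) = 2 ^ (i : ℕ) + chi Y := Finset.sum_insert hi
    have := hammingWeight_add_le (2 ^ (i : ℕ)) (chi Y)
    rw [hammingWeight_two_pow] at this
    rw [h, Finset.card_insert_of_notMem hi]
    omega

/-- If no carry reduces the Hamming weight of `chi Y + chi U`, then `Y` and `U` are disjoint. -/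
lemma disjoint_of_hammingWeight_chi_add {m : ℕ} {Y U : Finset (Fin m)}
    (h : hammingWeight (chi Y + chi U) = Y.card + U.card) : Disjoint Y U := by
  rw [Finset.disjoint_left]
  intro i hY hU
  have eY : 2 ^ (i : ℕ) + chi (Y.erase i) = chi Y :=
    Finset.add_sum_erase Y (fun i : Fin m => 2 ^ (i : ℕ)) hY
  have eU : 2 ^ (i : ℕ) + chi (U.erase i) = chi U :=
    Finset.add_sum_erase U (fun i : Fin m => 2 ^ (i : ℕ)) hU
  have e : chi Y + chi U = 2 ^ ((i : ℕ) + 1) + (chi (Y.erase i) + chi (U.erase i)) := by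
    rw [← eY, ← eU]; ring
  have h1 := hammingWeight_add_le (2 ^ ((i : ℕ) + 1)) (chi (Y.erase i) + chi (U.erase i))
  have h2 := hammingWeight_add_le (chi (Y.erase i)) (chi (U.erase i))
  have h3 := hammingWeight_chi_le (Y.erase i)
  have h4 := hammingWeight_chi_le (U.erase i)
  have h5 := Finset.card_erase_add_one hY
  have h6 := Finset.card_erase_add_one hU
  rw [hammingWeight_two_pow, ← e] at h1
  omega

lemma of_coeff_reprPoly_ne_zero {p : Polynomial ℕ} {e : ℕ} (h : (reprPoly p).coeff e ≠ 0) :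
    p.coeff e ≠ 0 := by
  unfold reprPoly at h
  rw [finsetSum_coeff] at h
  obtain ⟨d, hd, hde⟩ := Finset.exists_ne_zero_of_sum_ne_zero h
  rw [coeff_X_pow] at hde
  obtain rfl : e = d := by by_contra hne; simp [hne] at hde
  exact mem_support_iff.mp hd

lemma of_coeff_hammingProj_ne_zero {p : Polynomial ℕ} {s e : ℕ}
    (h : (hammingProj s p).coeff e ≠ 0) : p.coeff e ≠ 0 ∧ hammingWeight e = s := by
  unfold hammingProj at h
  rw [finsetSum_coeff] at h
  obtain ⟨d, hd, hde⟩ := Finset.exists_ne_zero_of_sum_ne_zero h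
  rw [coeff_C_mul_X_pow] at hde
  obtain rfl : e = d := by by_contra hne; simp [hne] at hde
  rw [Finset.mem_filter, mem_support_iff] at hd
  exact hd

/-- The strengthened induction claim: each exponent of `p[s,j+1,ℓ]` encodes the union of a
suitable family of `j + 1` committees. -/
lemma exists_family_of_coeff_ne_zero {m k : ℕ} (hk : 1 ≤ k) (β : Finset (Fin m) → ℕ) (j : ℕ) :
    ∀ s ℓ e : ℕ, (polyP m k β (j + 1) s ℓ).coeff e ≠ 0 →
    ∃ 𝒮 : Finset (Finset (Fin m)),
      𝒮.card = j + 1 ∧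
      (∀ S ∈ 𝒮, ∀ T ∈ 𝒮, S ≠ T → S ∩ T = ∅) ∧
      (∀ S ∈ 𝒮, S.card = k) ∧
      (𝒮.biUnion id).card = s ∧
      ℓ ≤ ∑ S ∈ 𝒮, β S ∧
      chi (𝒮.biUnion id) = e := by
  induction j with
  | zero =>
    intro s ℓ e h
    simp only [polyP] at h
    split_ifs at h with hs
    · rw [finsetSum_coeff] at h
      obtain ⟨Y, hY, hYe⟩ := Finset.exists_ne_zero_of_sum_ne_zero h
      rw [coeff_X_pow] at hYe
      obtain rfl : e = chi Y := by by_contra hne; simp [hne] at hYe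
      simp only [Finset.mem_filter, Finset.mem_univ, true_and] at hY
      refine ⟨{Y}, by simp, ?_, by simpa using hY.1, by simp [hY.1, hs], by simpa using hY.2,
        by simp⟩
      intro S hS T hT hne
      rw [Finset.mem_singleton] at hS hT
      exact absurd (hS.trans hT.symm) hne
    · simp at h
  | succ j ih =>
    intro s ℓ e h
    rw [polyP] at h
    obtain ⟨h, hw⟩ := of_coeff_hammingProj_ne_zero (of_coeff_reprPoly_ne_zero h)
    rw [finsetSum_coeff] at h
    obtain ⟨Y, hY, hYe⟩ := Finset.exists_ne_zero_of_sum_ne_zero h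
    simp only [Finset.mem_filter, Finset.mem_univ, true_and] at hY
    rw [coeff_X_pow_mul'] at hYe
    split_ifs at hYe with hle
    · obtain ⟨𝒮, hcard, hdis, hsz, hU, hβ, hchi⟩ := ih _ _ _ hYe
      have hsub : ∀ S ∈ 𝒮, S ⊆ 𝒮.biUnion id := fun S hS => Finset.subset_biUnion_of_mem id hS
      -- A nonempty family of nonempty committees has a nonempty union, so the subtraction
      -- `s - k` cannot have been truncated.
      have hpos : k ≤ s - k := by
        obtain ⟨S, hS⟩ : 𝒮.Nonempty := Finset.card_pos.mp (by omega)
        have := Finset.card_le_card (hsub S hS)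
        rw [hsz S hS, hU] at this
        exact this
      have he : chi Y + chi (𝒮.biUnion id) = e := by omega
      have hYU : Disjoint Y (𝒮.biUnion id) := by
        apply disjoint_of_hammingWeight_chi_add
        rw [he, hw, hY, hU]; omega
      have hYS : ∀ S ∈ 𝒮, Disjoint Y S := fun S hS => hYU.mono_right (hsub S hS)
      have hnot : Y ∉ 𝒮 := by
        intro hmem
        have : Y = ∅ := Finset.disjoint_self_iff_empty Y |>.mp (hYS Y hmem)
        rw [this, Finset.card_empty] at hY
        omega
      refine ⟨insert Y 𝒮, by rw [Finset.card_insert_of_notMem hnot, hcard], ?_, ?_, ?_, ?_, ?_⟩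
      · intro S hS T hT hne
        rcases Finset.mem_insert.mp hS with rfl | hS₁ <;>
          rcases Finset.mem_insert.mp hT with rfl | hT₁
        · exact absurd rfl hne
        · exact Finset.disjoint_iff_inter_eq_empty.mp (hYS T hT₁)
        · exact Finset.disjoint_iff_inter_eq_empty.mp (hYS S hS₁).symm
        · exact hdis S hS₁ T hT₁ hne
      · intro S hS
        rcases Finset.mem_insert.mp hS with rfl | hS
        · exact hY
        · exact hsz S hS
      · rw [Finset.biUnion_insert, id, Finset.card_union_of_disjoint hYU, hY, hU]; omega
      · rw [Finset.sum_insert hnot]; omega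
      · rw [Finset.biUnion_insert, id, ← he]
        exact Finset.sum_union hYU
    · exact absurd rfl hYe

/-- Forward correctness of the polynomial-multiplication algorithm (utilitarian case):
if `p[s,j,ℓ] ≠ 0` then there are `j` pairwise disjoint size-`k` committees whose union
has `s` candidates and whose total score is at least `ℓ`. -/
theorem polyP_forward {m k : ℕ} (hm : 1 ≤ m) (hk : 1 ≤ k) (β : Finset (Fin m) → ℕ)
    (j s ℓ : ℕ) (hj : 1 ≤ j) (hne : polyP m k β j s ℓ ≠ 0) :
    ∃ 𝒮 : Finset (Finset (Fin m)),
      𝒮.card = j ∧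
      (∀ S ∈ 𝒮, ∀ T ∈ 𝒮, S ≠ T → S ∩ T = ∅) ∧
      (∀ S ∈ 𝒮, S.card = k) ∧
      (𝒮.biUnion id).card = s ∧
      ℓ ≤ ∑ S ∈ 𝒮, β S := by
  obtain ⟨j, rfl⟩ : ∃ i, j = i + 1 := ⟨j - 1, by omega⟩
  obtain ⟨e, he⟩ : ∃ e, (polyP m k β (j + 1) s ℓ).coeff e ≠ 0 := by
    by_contra! hall
    exact hne (Polynomial.ext fun e => by simp [hall e])
  obtain ⟨𝒮, h1, h2, h3, h4, h5, -⟩ := exists_family_of_coeff_ne_zero hk β j s ℓ e he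
  exact ⟨𝒮, h1, h2, h3, h4, h5⟩
end

section
/- (Reverse correctness claim for the polynomial-multiplication algorithm, utilitarian case.) Fix m, k ≥ 1 and a committee scoring function β : Finset (Fin m) → ℕ, and let p[s,j,ℓ] be the recursively defined polynomials described in the context. Then for all j ≥ 1 and ℓ : ℕ: if S : Fin j → Finset (Fin m) is a family of pairwise disjoint committees, each of cardinality k, with ∑ i, β (S i) ≥ ℓ, and s denotes the cardinality of ⋃ i, S i (so s = k * j), then the exponent χ(⋃ i, S i) lies in the support of p[s,j,ℓ]; in particular p[s,j,ℓ] ≠ 0. -/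
/-!
The proof is an induction on the number of committees. Split off the committee `S 0`; the
union of the others contributes its monomial to `p[s - k, j - 1, ℓ - β (S 0)]` by induction.
Since `S 0` is disjoint from that union, `chi` adds, so the product of the two monomials is
the monomial of the whole union. Coefficients are natural numbers, so nothing cancels in the
sum over `Y`, and the monomial survives the Hamming projection because `chi` of a set has as
many binary ones as the set has elements (`hammingWeight_chi`). Passing to the
representative polynomial does not change the support.
-/

open Polynomial

theorem hammingWeight_eq_length_bitIndices (n : ℕ) :
    hammingWeight n = n.bitIndices.length := by
  unfold hammingWeight
  induction n using Nat.evenOddRec with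
  | h0 => simp
  | h_even n ih =>
    rcases Nat.eq_zero_or_pos n with rfl | hn
    · simp
    · rw [Nat.digits_base_mul (by norm_num) hn]
      simpa using ih
  | h_odd n ih =>
    have h : Nat.digits 2 (2 * n + 1) = 1 :: Nat.digits 2 n := by
      rw [add_comm, Nat.digits_add 2 (by norm_num) 1 n (by norm_num) (by simp)]
    rw [h, List.sum_cons, ih, Nat.bitIndices_two_mul_add_one]
    simp [add_comm]

theorem hammingWeight_chi {m : ℕ} (Y : Finset (Fin m)) : hammingWeight (chi Y) = Y.card := by
  have h : chi Y = ∑ i ∈ Y.map Fin.valEmbedding, 2 ^ i := by simp [chi]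
  rw [hammingWeight_eq_length_bitIndices, h,
    ← List.toFinset_card_of_nodup (Nat.bitIndices_sorted).nodup,
    Finset.toFinset_bitIndices_sum_two_pow, Finset.card_map]

theorem chi_union {m : ℕ} {Y Z : Finset (Fin m)} (h : Disjoint Y Z) :
    chi (Y ∪ Z) = chi Y + chi Z :=
  Finset.sum_union h

theorem coeff_reprPoly_ne_zero {p : Polynomial ℕ} {e : ℕ} (h : p.coeff e ≠ 0) :
    (reprPoly p).coeff e ≠ 0 := by
  simp [reprPoly, coeff_X_pow, h]

theorem coeff_hammingProj_ne_zero {p : Polynomial ℕ} {e s : ℕ} (h : p.coeff e ≠ 0)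
    (hs : hammingWeight e = s) : (hammingProj s p).coeff e ≠ 0 := by
  simp [hammingProj, coeff_X_pow, h, hs]

/-- With coefficients in `ℕ` there is no cancellation in a sum of polynomials. -/
theorem coeff_sum_ne_zero {ι : Type*} {T : Finset ι} {f : ι → Polynomial ℕ} {a : ι} {e : ℕ}
    (ha : a ∈ T) (h : (f a).coeff e ≠ 0) : (∑ i ∈ T, f i).coeff e ≠ 0 := by
  rw [finsetSum_coeff]
  exact fun h0 => h (Finset.sum_eq_zero_iff.mp h0 a ha)

/-- The inductive form of the claim, for a family of `j + 1` committees. -/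
theorem coeff_polyP_ne_zero {m k : ℕ} (β : Finset (Fin m) → ℕ) (j : ℕ) :
    ∀ (ℓ : ℕ) (S : Fin (j + 1) → Finset (Fin m)),
      (∀ a b, a ≠ b → Disjoint (S a) (S b)) → (∀ i, (S i).card = k) →
      ℓ ≤ ∑ i, β (S i) →
      (polyP m k β (j + 1) (Finset.univ.biUnion S).card ℓ).coeff
        (chi (Finset.univ.biUnion S)) ≠ 0 := by
  induction j with
  | zero =>
    intro ℓ S _ hcard hscore
    have hU : Finset.univ.biUnion S = S 0 := by ext; simp
    rw [hU, polyP, if_pos (hcard 0)]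
    refine coeff_sum_ne_zero (a := S 0) ?_ (by simp)
    simpa [hcard 0] using hscore
  | succ j ih =>
    intro ℓ S hdisj hcard hscore
    set U := Finset.univ.biUnion (fun i : Fin (j + 1) => S i.succ) with hUdef
    have hU : Finset.univ.biUnion S = S 0 ∪ U := by
      ext x
      simp [hUdef, Fin.exists_fin_succ]
    have hd : Disjoint (S 0) U := by
      rw [hUdef, Finset.disjoint_biUnion_right]
      exact fun i _ => hdisj _ _ (Fin.succ_ne_zero i).symm
    have hc : (S 0 ∪ U).card = k + U.card := by
      rw [Finset.card_union_of_disjoint hd, hcard 0]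
    have hrec := ih (ℓ - β (S 0)) (fun i => S i.succ)
      (fun a b hab => hdisj _ _ (fun h => hab (Fin.succ_injective _ h)))
      (fun i => hcard _) (by rw [Fin.sum_univ_succ] at hscore; omega)
    rw [hU, polyP]
    refine coeff_reprPoly_ne_zero (coeff_hammingProj_ne_zero ?_ (hammingWeight_chi _))
    refine coeff_sum_ne_zero (a := S 0) (by simp [hcard 0]) ?_
    rw [chi_union hd, hc, Nat.add_sub_cancel_left, add_comm (chi _), coeff_X_pow_mul]
    exact hrec

/-- Reverse correctness of the polynomial-multiplication algorithm (utilitarian case):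
a family of `j` pairwise disjoint size-`k` committees of total score at least `ℓ`
contributes the monomial with exponent `χ` of its union to `p[s,j,ℓ]`, where `s` is
the cardinality of the union; in particular `p[s,j,ℓ] ≠ 0`. -/
theorem polyP_reverse {m k : ℕ} (hm : 1 ≤ m) (hk : 1 ≤ k) (β : Finset (Fin m) → ℕ)
    (j ℓ : ℕ) (hj : 1 ≤ j)
    (S : Fin j → Finset (Fin m))
    (hdisj : ∀ a b : Fin j, a ≠ b → S a ∩ S b = ∅)
    (hcard : ∀ i, (S i).card = k)
    (hscore : ℓ ≤ ∑ i, β (S i))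
    (s : ℕ) (hs : s = (Finset.univ.biUnion S).card) :
    chi (Finset.univ.biUnion S) ∈ (polyP m k β j s ℓ).support ∧
      polyP m k β j s ℓ ≠ 0 := by
  subst hs
  obtain ⟨j, rfl⟩ := Nat.exists_eq_add_of_le' hj
  have h := coeff_polyP_ne_zero β j ℓ S
    (fun a b hab => Finset.disjoint_iff_inter_eq_empty.mpr (hdisj a b hab)) hcard hscore
  exact ⟨mem_support_iff.mpr h, fun h0 => h (by rw [h0, coeff_zero])⟩
end

section
/- (Success probability of a uniformly random coloring; Lemma 5.4 of Cygan et al. as used in the randomized FPT(τ) algorithm.) Let U be a finite type and X : Finset U with X.card = n and n ≥ 1. Then the number of functions χ : U → Fin n that are injective on X is at least Real.exp (−(n : ℝ)) * (n : ℝ)^(Fintype.card U); equivalently, a function χ : U → Fin n chosen uniformly at random colors the elements of X with pairwise distinct colors with probability at least e^(−n). -/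
/-!
A coloring injective on `X` amounts to an embedding `X ↪ Fin n` together
with an arbitrary function on the complement of `X`, so there are exactly `n! * n ^ (|U| - n)` of
them. The bound then reduces to `n ^ n / n! ≤ exp n`, which holds since the left-hand side is a
single term of the exponential series at `n`.
-/

/-- Restricting to `X` and to its complement splits a coloring injective on `X` into an embedding
of `X` and an arbitrary coloring of the complement. -/
noncomputable def injOnColoringEquiv {U : Type*} (X : Finset U) (n : ℕ) :
    {χ : U → Fin n // Set.InjOn χ ↑X} ≃ (X ↪ Fin n) × ({u : U // u ∉ X} → Fin n) := by
  classical
  exact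
    { toFun := fun χ => (⟨fun x => χ.1 x, fun x y h => Subtype.ext (χ.2 x.2 y.2 h)⟩,
        fun u => χ.1 u)
      invFun := fun p => ⟨fun u => if h : u ∈ X then p.1 ⟨u, h⟩ else p.2 ⟨u, h⟩, by
        intro x hx y hy hxy
        have hx' : x ∈ X := hx
        have hy' : y ∈ X := hy
        simpa [hx', hy'] using hxy⟩
      left_inv := fun χ => by
        ext u
        by_cases h : u ∈ X
        · simp only [h, dif_pos]
          rfl
        · simp [h]
      right_inv := fun p => by
        refine Prod.ext ?_ ?_
        · ext x
          simp
        · funext u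
          simp [u.2] }

theorem card_injOn_colorings_eq {U : Type*} [Fintype U] (X : Finset U) (n : ℕ)
    (hX : X.card = n) :
    Nat.card {χ : U → Fin n // Set.InjOn χ ↑X} =
      n.factorial * n ^ (Fintype.card U - n) := by
  classical
  rw [Nat.card_congr (injOnColoringEquiv X n), Nat.card_prod, Nat.card_eq_fintype_card,
    Nat.card_eq_fintype_card, Fintype.card_embedding_eq, Fintype.card_fun,
    Fintype.card_subtype_compl]
  simp [hX, Nat.descFactorial_self]

/-- Success probability of a uniformly random coloring: the number of colorings
`χ : U → Fin n` injective on a fixed set `X` of cardinality `n` is at least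
`e^(-n) * n^(|U|)`; equivalently a uniformly random coloring is injective on `X`
with probability at least `e^(-n)`. -/
theorem card_injOn_colorings_ge {U : Type*} [Fintype U] (X : Finset U) (n : ℕ)
    (hn : 1 ≤ n) (hX : X.card = n) :
    Real.exp (-(n : ℝ)) * (n : ℝ) ^ (Fintype.card U) ≤
      (Nat.card {χ : U → Fin n // Set.InjOn χ ↑X} : ℝ) := by
  have hle : n ≤ Fintype.card U := hX ▸ X.card_le_univ
  have hfac : Real.exp (-(n : ℝ)) * (n : ℝ) ^ n ≤ n.factorial := by
    have h := Real.pow_div_factorial_le_exp (x := (n : ℝ)) (Nat.cast_nonneg n) n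
    rw [div_le_iff₀ (by positivity)] at h
    rw [Real.exp_neg, inv_mul_le_iff₀ (Real.exp_pos _)]
    exact h
  rw [card_injOn_colorings_eq X n hX]
  push_cast
  calc Real.exp (-(n : ℝ)) * (n : ℝ) ^ (Fintype.card U)
      = Real.exp (-(n : ℝ)) * (n : ℝ) ^ n * (n : ℝ) ^ (Fintype.card U - n) := by
        rw [mul_assoc, ← pow_add, Nat.add_sub_cancel' hle]
    _ ≤ n.factorial * (n : ℝ) ^ (Fintype.card U - n) := by gcongr
end
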